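/- Let G be a finite multigraph (multiple edges allowed, no loops) and let k be an odd positive integer. Then ⌈Δ(G)/k⌉ ≤ χ'_k(G) ≤ ch'_k(G) ≤ ⌈3·Δ(G)/(3k − 1)⌉. -/

import Mathlib

open SimpleGraph

/-- A multigraph on vertex type `V` with edge index type `E`: each edge has a pair of
distinct endpoints (no loops); several edges may share the same endpoints. -/
structure Multigraph (V : Type*) (E : Type*) where
  ends : E → Sym2 V
  no_loops : ∀ e, ¬ (ends e).IsDiag

/-- The degree of a vertex of a multigraph: the number of edges incident with it. -/
noncomputable def Multigraph.degree {V E : Type*} (G : Multigraph V E) (v : V) : ℕ :=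
  {e : E | v ∈ G.ends e}.ncard

/-- The maximum degree `Δ(G)` of a multigraph. -/
noncomputable def Multigraph.maxDegree {V E : Type*} [Fintype V] (G : Multigraph V E) : ℕ :=
  Finset.univ.sup fun v => G.degree v

/-- A `k`-frugal edge colouring: no colour appears more than `k` times on the edges
incident with any vertex. -/
def Multigraph.IsFrugalEdgeColoring {V E α : Type*} (G : Multigraph V E) (k : ℕ)
    (c : E → α) : Prop :=
  ∀ (v : V) (a : α), {e : E | v ∈ G.ends e ∧ c e = a}.ncard ≤ k

/-- The `k`-frugal chromatic index `χ'_k(G)`: the least number of colours in a `k`-frugal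
edge colouring of `G`. -/
noncomputable def Multigraph.frugalChromaticIndex {V E : Type*} (G : Multigraph V E)
    (k : ℕ) : ℕ :=
  sInf {n : ℕ | ∃ c : E → ℕ, (∀ e, c e < n) ∧ G.IsFrugalEdgeColoring k c}

/-- The `k`-frugal edge choice number `ch'_k(G)`: the least `t` such that every assignment
of lists of `t` colours to the edges admits a `k`-frugal edge colouring from the lists. -/
noncomputable def Multigraph.frugalEdgeChoiceNumber {V E : Type*} (G : Multigraph V E)
    (k : ℕ) : ℕ :=
  sInf {t : ℕ | ∀ L : E → Finset ℤ, (∀ e, (L e).card = t) →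
    ∃ c : E → ℤ, (∀ e, c e ∈ L e) ∧ G.IsFrugalEdgeColoring k c}

/-!
Write `k = 2ℓ + 1`, let `t` be the size of the lists and put `r = ⌊2t/3⌋`, so that the choice of `t`
gives `Δ(G) ≤ 2tℓ + r`. A balanced orientation of `G` is a bipartite multigraph, with tails on the
left and heads on the right, of maximum degree at most `tℓ + ⌈r/2⌉`, and a König colouring splits it
into a part of maximum degree at most `tℓ` and a part `D` of maximum degree at most `⌈r/2⌉`. By
Galvin's theorem the first part has a list colouring with every colour on at most `ℓ` edges out of
and at most `ℓ` edges into each vertex, hence on at most `2ℓ` edges at each vertex.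

It remains to use every colour only once more at each vertex. If `D`, as a subgraph of `G`, had
degrees at most `r`, the list version of Shannon's theorem (a proper colouring from lists of size
`r + ⌈r/2⌉ ≤ t`) would do. The degrees in `D` can be `r + 1`, but then `D` contains a matching with
a tail at every vertex of degree `r + 1`. As such a vertex has fewer than `2tℓ` edges of the first
part, the matching edge leaving it can take a colour seen there fewer than `2ℓ` times. The matching
then counts against the proper colouring of the rest of `D` at its heads only.
-/

namespace Multigraph

open Finset
open scoped Classical

/-! ### List colouring of bipartite multigraphs -/

section Bipartite

variable {E A B α : Type*}

/-- The number of edges in `s` that `z` sends to `u`. Here `z` selects one of the two ends of each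
edge: the left or the right end in a bipartite multigraph, the tail or the head in an orientation;
a bipartite multigraph is thus given by `l : E → A`, `r : E → B` and its edge set `s`. -/
noncomputable def sideDegree (z : E → A) (s : Finset E) (u : A) : ℕ :=
  #{e ∈ s | z e = u}

section SideDegree

variable {z : E → A} {s t M : Finset E}

theorem sideDegree_mono (h : s ⊆ t) (u : A) : sideDegree z s u ≤ sideDegree z t u :=
  card_le_card (filter_subset_filter _ h)

theorem sideDegree_union_le (s t : Finset E) (u : A) :
    sideDegree z (s ∪ t) u ≤ sideDegree z s u + sideDegree z t u := by
  rw [sideDegree, filter_union]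
  exact card_union_le _ _

theorem sideDegree_sdiff_add (h : M ⊆ s) (u : A) :
    sideDegree z (s \ M) u + sideDegree z M u = sideDegree z s u := by
  rw [sideDegree, sideDegree, ← card_union_of_disjoint (disjoint_filter_filter sdiff_disjoint),
    ← filter_union, sdiff_union_of_subset h, sideDegree]

theorem sideDegree_le_one (h : Set.InjOn z M) (u : A) : sideDegree z M u ≤ 1 :=
  card_le_one.2 fun e he f hf => by
    rw [mem_filter] at he hf
    exact h he.1 hf.1 (he.2.trans hf.2.symm)

theorem injOn_of_sideDegree_le_one (h : ∀ u, sideDegree z M u ≤ 1) : Set.InjOn z M :=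
  fun e he f hf hef =>
    card_le_one.1 (h (z f)) e (mem_filter.2 ⟨he, hef⟩) f (mem_filter.2 ⟨hf, rfl⟩)

theorem sideDegree_pos {u : A} : 0 < sideDegree z M u ↔ u ∈ M.image z := by
  rw [sideDegree, card_pos, filter_nonempty_iff, mem_image]

end SideDegree

/-- Edges of `s` with the same `z`-end have different values of `c`. For a colouring `c` this says
that it is proper at the vertices on the side of `z`; for `c : E → ℕ` it says that `c` ranks the
edges at each of these vertices strictly. -/
def IsProperAlong (z : E → A) (c : E → α) (s : Finset E) : Prop :=
  ∀ ⦃e⦄, e ∈ s → ∀ ⦃f⦄, f ∈ s → z e = z f → c e = c f → e = f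

namespace IsProperAlong

variable {z : E → A} {c : E → α} {s t M : Finset E}

theorem mono (h : IsProperAlong z c t) (hst : s ⊆ t) : IsProperAlong z c s :=
  fun _ he _ hf => h (hst he) (hst hf)

theorem piecewise_const {a : α} (h : IsProperAlong z c (s \ M)) (hM : Set.InjOn z M)
    (ha : ∀ e ∈ s \ M, c e ≠ a) : IsProperAlong z (M.piecewise (fun _ => a) c) s := by
  intro e he f hf hz hc
  by_cases heM : e ∈ M <;> by_cases hfM : f ∈ M <;>
    simp only [heM, hfM, piecewise_eq_of_mem, piecewise_eq_of_notMem, not_false_eq_true] at hc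
  · exact hM heM hfM hz
  · exact absurd hc.symm (ha f (mem_sdiff.2 ⟨hf, hfM⟩))
  · exact absurd hc (ha e (mem_sdiff.2 ⟨he, heM⟩))
  · exact h (mem_sdiff.2 ⟨he, heM⟩) (mem_sdiff.2 ⟨hf, hfM⟩) hz hc

theorem sideDegree_le {I : Finset α} (h : IsProperAlong z c s) (hI : ∀ e ∈ s, c e ∈ I) (u : A) :
    sideDegree z s u ≤ #I := by
  refine card_le_card_of_injOn c (fun e he => hI e (mem_filter.1 he).1) fun e he f hf => ?_
  rw [mem_coe, mem_filter] at he hf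
  exact h he.1 hf.1 (he.2.trans hf.2.symm)

theorem sideDegree_filter_eq_le_one (h : IsProperAlong z c s) (a : α) (u : A) :
    sideDegree z {e ∈ s | c e = a} u ≤ 1 :=
  (h.mono (filter_subset _ _)).sideDegree_le (I := {a})
    (fun _ he => mem_singleton.2 (mem_filter.1 he).2) u

end IsProperAlong

/-- The number of edges of `s` which share the `z`-end of `e` and are preferred to `e`, when smaller
values of `p` are preferred. -/
noncomputable def rank (z : E → A) (p : E → ℕ) (s : Finset E) (e : E) : ℕ :=
  #{f ∈ s | z f = z e ∧ p f < p e}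

section Rank

variable {z : E → A} {p : E → ℕ} {s t M : Finset E} {e : E}

theorem rank_mono (h : s ⊆ t) (e : E) : rank z p s e ≤ rank z p t e :=
  card_le_card (filter_subset_filter _ h)

theorem rank_lt_rank (h : s ⊆ t) {f : E} (hft : f ∈ t) (hfs : f ∉ s) (hz : z f = z e)
    (hp : p f < p e) : rank z p s e < rank z p t e := by
  refine card_lt_card ⟨filter_subset_filter _ h, fun hsub => hfs ?_⟩
  exact (mem_filter.1 (hsub (mem_filter.2 ⟨hft, hz, hp⟩))).1

theorem rank_lt_sideDegree (he : e ∈ s) : rank z p s e < sideDegree z s (z e) := by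
  refine card_lt_card ⟨monotone_filter_right _ fun _ _ h => h.1, fun hsub => ?_⟩
  exact lt_irrefl _ (mem_filter.1 (hsub (mem_filter.2 ⟨he, rfl⟩))).2.2

theorem rank_piecewise_zero_of_mem (he : e ∈ M) :
    rank z (M.piecewise 0 (p + 1)) s e = 0 := by
  simp [rank, he]

theorem rank_piecewise_zero_le (he : e ∉ M) :
    rank z (M.piecewise 0 (p + 1)) s e ≤ rank z p (s \ M) e + sideDegree z M (z e) := by
  refine (card_le_card fun f hf => ?_).trans (card_union_le _ _)
  obtain ⟨hfs, hz, hlt⟩ := mem_filter.1 hf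
  by_cases hfM : f ∈ M
  · exact mem_union_right _ (mem_filter.2 ⟨hfM, hz⟩)
  · rw [piecewise_eq_of_notMem _ _ _ hfM, piecewise_eq_of_notMem _ _ _ he] at hlt
    exact mem_union_left _ (mem_filter.2 ⟨mem_sdiff.2 ⟨hfs, hfM⟩, hz, Nat.lt_of_succ_lt_succ hlt⟩)

theorem rank_piecewise_const_le {N : ℕ} (he : e ∉ M) (hN : p e ≤ N) :
    rank z (M.piecewise (fun _ => N) p) s e ≤ rank z p (s \ M) e := by
  refine card_le_card fun f hf => ?_
  obtain ⟨hfs, hz, hlt⟩ := mem_filter.1 hf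
  rw [piecewise_eq_of_notMem _ _ _ he] at hlt
  by_cases hfM : f ∈ M
  · rw [piecewise_eq_of_mem _ _ _ hfM] at hlt
    exact absurd hlt hN.not_gt
  · rw [piecewise_eq_of_notMem _ _ _ hfM] at hlt
    exact mem_filter.2 ⟨mem_sdiff.2 ⟨hfs, hfM⟩, hz, hlt⟩

end Rank

variable {l : E → A} {r : E → B} {p q : E → ℕ} {s M K : Finset E}

/-- `K` is a stable matching of the bipartite multigraph with edge set `s`, in the sense of Gale and
Shapley, when the left vertices rank their edges by `p` and the right vertices by `q` (smaller is
better): each edge outside `K` is worse, at one of its ends, than an edge of `K`. -/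
structure IsStableMatching (l : E → A) (r : E → B) (p q : E → ℕ) (s K : Finset E) : Prop where
  subset : K ⊆ s
  injOn_left : Set.InjOn l K
  injOn_right : Set.InjOn r K
  blocked : ∀ e ∈ s, e ∉ K → (∃ f ∈ K, l f = l e ∧ p f < p e) ∨ (∃ f ∈ K, r f = r e ∧ q f < q e)

/-- The edges of `s` that are a best choice at their left end. -/
noncomputable def leftFavourites (l : E → A) (p : E → ℕ) (s : Finset E) : Finset E :=
  {e ∈ s | ∀ f ∈ s, l f = l e → p e ≤ p f}

theorem isStableMatching_leftFavourites (hp : IsProperAlong l p s)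
    (hr : Set.InjOn r (leftFavourites l p s)) :
    IsStableMatching l r p q s (leftFavourites l p s) where
  subset := filter_subset _ _
  injOn_left e he f hf hef := by
    obtain ⟨hes, he⟩ := mem_filter.1 (mem_coe.1 he)
    obtain ⟨hfs, hf⟩ := mem_filter.1 (mem_coe.1 hf)
    exact hp hes hfs hef (le_antisymm (he f hfs hef.symm) (hf e hes hef))
  injOn_right := hr
  blocked e he heF := by
    obtain ⟨f, hf, hmin⟩ :=
      exists_min_image {g ∈ s | l g = l e} p ⟨e, mem_filter.2 ⟨he, rfl⟩⟩
    obtain ⟨hfs, hfe⟩ := mem_filter.1 hf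
    refine Or.inl ⟨f, mem_filter.2 ⟨hfs, fun g hg hgf => ?_⟩, hfe, ?_⟩
    · exact hmin g (mem_filter.2 ⟨hg, hgf.trans hfe⟩)
    · by_contra! hlt
      exact heF (mem_filter.2 ⟨he, fun g hg hge => hlt.trans (hmin g (mem_filter.2 ⟨hg, hge⟩))⟩)

theorem IsStableMatching.of_erase {e f : E} (h : IsStableMatching l r p q (s.erase f) K)
    (he : e ∈ leftFavourites l p s) (hr : r e = r f) (hq : q e < q f) :
    IsStableMatching l r p q s K where
  subset := h.subset.trans (erase_subset _ _)
  injOn_left := h.injOn_left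
  injOn_right := h.injOn_right
  blocked g hg hgK := by
    obtain ⟨hes, hemin⟩ := mem_filter.1 he
    rcases ne_or_eq g f with hgf | rfl
    · exact h.blocked g (mem_erase.2 ⟨hgf, hg⟩) hgK
    · right
      by_cases heK : e ∈ K
      · exact ⟨e, heK, hr, hq⟩
      · have hne : e ≠ g := fun heg => hq.ne (congrArg q heg)
        rcases h.blocked e (mem_erase.2 ⟨hne, hes⟩) heK with ⟨k, hk, hl, hp⟩ | ⟨k, hk, hkr, hkq⟩
        · exact absurd hp (hemin k (mem_of_mem_erase (h.subset hk)) hl).not_gt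
        · exact ⟨k, hk, hkr.trans hr, hkq.trans hq⟩

/-- Galvin's existence proof: as long as two left favourites compete for a right vertex, the one
that is worse there can be discarded. -/
theorem exists_isStableMatching (hp : IsProperAlong l p s) (hq : IsProperAlong r q s) :
    ∃ K, IsStableMatching l r p q s K := by
  induction s using Finset.strongInduction with
  | H s ih =>
    by_cases hinj : Set.InjOn r (leftFavourites l p s)
    · exact ⟨_, isStableMatching_leftFavourites hp hinj⟩
    · obtain ⟨e, he, f, hf, hr, hlt⟩ : ∃ e ∈ leftFavourites l p s, ∃ f ∈ leftFavourites l p s,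
          r e = r f ∧ q e < q f := by
        simp only [Set.InjOn, mem_coe, not_forall] at hinj
        obtain ⟨e, he, f, hf, hr, hne⟩ := hinj
        have hq_ne : q e ≠ q f := fun h => hne (hq (mem_filter.1 he).1 (mem_filter.1 hf).1 hr h)
        rcases hq_ne.lt_or_gt with h | h
        · exact ⟨e, he, f, hf, hr, h⟩
        · exact ⟨f, hf, e, he, hr.symm, h⟩
      obtain ⟨K, hK⟩ := ih (s.erase f) (erase_ssubset (mem_filter.1 hf).1)
        (hp.mono (erase_subset _ _)) (hq.mono (erase_subset _ _))
      exact ⟨K, hK.of_erase he hr hlt⟩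

theorem IsStableMatching.nonempty (h : IsStableMatching l r p q s K) (hs : s.Nonempty) :
    K.Nonempty := by
  obtain ⟨e, he⟩ := hs
  by_cases heK : e ∈ K
  · exact ⟨e, heK⟩
  · rcases h.blocked e he heK with ⟨f, hf, -⟩ | ⟨f, hf, -⟩ <;> exact ⟨f, hf⟩

theorem IsStableMatching.rank_add_rank_sdiff_lt {t : Finset E} {e : E}
    (h : IsStableMatching l r p q s K) (hst : s ⊆ t) (he : e ∈ s) (heK : e ∉ K) :
    rank l p (t \ K) e + rank r q (t \ K) e < rank l p t e + rank r q t e := by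
  have hK {f : E} (hf : f ∈ K) : f ∉ t \ K := fun hf' => (mem_sdiff.1 hf').2 hf
  rcases h.blocked e he heK with ⟨f, hf, hl, hp⟩ | ⟨f, hf, hr, hq⟩
  · exact add_lt_add_of_lt_of_le
      (rank_lt_rank sdiff_subset (hst (h.subset hf)) (hK hf) hl hp) (rank_mono sdiff_subset e)
  · exact add_lt_add_of_le_of_lt (rank_mono sdiff_subset e)
      (rank_lt_rank sdiff_subset (hst (h.subset hf)) (hK hf) hr hq)

/-- `c` is a proper colouring from the lists `L` of the edges `s` of the bipartite multigraph given
by `l` and `r`. -/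
structure IsBipartiteListColoring (l : E → A) (r : E → B) (s : Finset E) (L : E → Finset α)
    (c : E → α) : Prop where
  mem : ∀ e ∈ s, c e ∈ L e
  left : IsProperAlong l c s
  right : IsProperAlong r c s

theorem IsBipartiteListColoring.piecewise_const {L : E → Finset α} {c : E → α} {a : α}
    (h : IsBipartiteListColoring l r (s \ K) (fun e => (L e).erase a) c) (hl : Set.InjOn l K)
    (hr : Set.InjOn r K) (ha : ∀ e ∈ K, a ∈ L e) :
    IsBipartiteListColoring l r s L (K.piecewise (fun _ => a) c) where
  mem e he := by
    by_cases heK : e ∈ K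
    · simpa [heK] using ha e heK
    · simpa [heK] using mem_of_mem_erase (h.mem e (mem_sdiff.2 ⟨he, heK⟩))
  left := h.left.piecewise_const hl fun e he => ne_of_mem_erase (h.mem e he)
  right := h.right.piecewise_const hr fun e he => ne_of_mem_erase (h.mem e he)

/-- Galvin's argument: a colour `a` is given to a stable matching of the edges whose lists contain
`a`. Every other such edge loses `a` from its list but also an edge preferred to it. -/
theorem exists_isBipartiteListColoring_of_rank [Nonempty α] (hp : IsProperAlong l p s)
    (hq : IsProperAlong r q s) (L : E → Finset α)
    (hL : ∀ e ∈ s, rank l p s e + rank r q s e < #(L e)) :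
    ∃ c : E → α, IsBipartiteListColoring l r s L c := by
  induction s using Finset.strongInduction generalizing L with
  | H s ih =>
    rcases s.eq_empty_or_nonempty with rfl | ⟨e₀, he₀⟩
    · exact ⟨fun _ => Classical.arbitrary α, by simp, by simp [IsProperAlong],
        by simp [IsProperAlong]⟩
    obtain ⟨a, ha⟩ : (L e₀).Nonempty := card_pos.1 ((Nat.zero_le _).trans_lt (hL e₀ he₀))
    have hsub : {e ∈ s | a ∈ L e} ⊆ s := filter_subset _ _
    obtain ⟨K, hK⟩ := exists_isStableMatching (hp.mono hsub) (hq.mono hsub)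
    have hKs : K ⊆ s := hK.subset.trans hsub
    have hKne : K.Nonempty := hK.nonempty ⟨e₀, mem_filter.2 ⟨he₀, ha⟩⟩
    have hL' : ∀ e ∈ s \ K, rank l p (s \ K) e + rank r q (s \ K) e < #((L e).erase a) := by
      intro e he
      obtain ⟨hes, heK⟩ := mem_sdiff.1 he
      have hLe := hL e hes
      by_cases hae : a ∈ L e
      · have := hK.rank_add_rank_sdiff_lt hsub (mem_filter.2 ⟨hes, hae⟩) heK
        rw [card_erase_of_mem hae]
        omega
      · rw [erase_eq_of_notMem hae]
        exact (add_le_add (rank_mono sdiff_subset e) (rank_mono sdiff_subset e)).trans_lt hLe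
    obtain ⟨c, hc⟩ := ih (s \ K) (sdiff_ssubset hKs hKne) (hp.mono sdiff_subset)
      (hq.mono sdiff_subset) _ hL'
    exact ⟨_, hc.piecewise_const hK.injOn_left hK.injOn_right
      fun e he => (mem_filter.1 (hK.subset he)).2⟩

/-- The larger of the degrees of the two ends of `e`. -/
noncomputable def maxEndDegree (l : E → A) (r : E → B) (s : Finset E) (e : E) : ℕ :=
  max (sideDegree l s (l e)) (sideDegree r s (r e))

theorem maxEndDegree_comm (l : E → A) (r : E → B) (s : Finset E) (e : E) :
    maxEndDegree l r s e = maxEndDegree r l s e :=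
  max_comm _ _

theorem maxEndDegree_sdiff_le (s M : Finset E) (e : E) :
    maxEndDegree l r (s \ M) e ≤ maxEndDegree l r s e :=
  max_le_max (sideDegree_mono sdiff_subset _) (sideDegree_mono sdiff_subset _)

theorem sideDegree_sdiff_lt {z : E → A} {u : A} (hM : M ⊆ s) (hu : u ∈ M.image z) :
    sideDegree z (s \ M) u < sideDegree z s u := by
  have := sideDegree_sdiff_add (z := z) hM u
  have := sideDegree_pos.2 hu
  omega

theorem maxEndDegree_sdiff_lt {e : E} (hM : M ⊆ s) (hl : l e ∈ M.image l)
    (hr : sideDegree r s (r e) < sideDegree l s (l e) ∨ r e ∈ M.image r) :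
    maxEndDegree l r (s \ M) e < maxEndDegree l r s e := by
  refine max_lt ((sideDegree_sdiff_lt hM hl).trans_le (le_max_left _ _)) ?_
  rcases hr with hlt | hmem
  · exact (sideDegree_mono sdiff_subset _).trans_lt (hlt.trans_le (le_max_left _ _))
  · exact (sideDegree_sdiff_lt hM hmem).trans_le (le_max_right _ _)

theorem exists_injOn_of_card_le_card_biUnion {ι β : Type*} [Nonempty β] (t : ι → Finset β)
    (S : Finset ι) (h : ∀ W ⊆ S, #W ≤ #(W.biUnion t)) :
    ∃ f : ι → β, Set.InjOn f S ∧ ∀ i ∈ S, f i ∈ t i := by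
  have hS : ∀ W : Finset S, #W ≤ #(W.biUnion fun i => t i) := fun W => by
    have hW := h _ (map_subtype_subset W)
    rwa [card_map, map_eq_image, image_biUnion] at hW
  obtain ⟨g, hg, hgt⟩ := (all_card_le_biUnion_card_iff_exists_injective _).1 hS
  obtain ⟨f, hf⟩ : ∃ f : ι → β, ∀ i : S, f i = g i :=
    ⟨_, Subtype.val_injective.extend_apply g fun _ => Classical.arbitrary β⟩
  refine ⟨f, fun i hi j hj hij => ?_, fun i hi => ?_⟩
  · rw [hf ⟨i, hi⟩, hf ⟨j, hj⟩] at hij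
    exact congrArg Subtype.val (hg hij)
  · rw [hf ⟨i, hi⟩]
    exact hgt ⟨i, hi⟩

/-- If Hall's condition fails for some `W`, then removing any member of `W` gives a smaller instance
of the hypotheses. -/
theorem exists_injOn_image_eq_biUnion {ι β : Type*} (t : ι → Finset β) {S : Finset ι}
    (hS : S.Nonempty) (ht : ∀ i ∈ S, (t i).Nonempty) (hcard : #(S.biUnion t) ≤ #S) :
    ∃ S' ⊆ S, S'.Nonempty ∧ ∃ f : ι → β, Set.InjOn f S' ∧ (∀ i ∈ S', f i ∈ t i) ∧
      S'.image f = S'.biUnion t := by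
  induction S using Finset.strongInduction with
  | H S ih =>
    by_cases hall : ∀ W ⊆ S, #W ≤ #(W.biUnion t)
    · have : Nonempty β := let ⟨i, hi⟩ := hS; (ht i hi).to_type
      obtain ⟨f, hf, hft⟩ := exists_injOn_of_card_le_card_biUnion t S hall
      refine ⟨S, Subset.rfl, hS, f, hf, hft, eq_of_subset_of_card_le ?_ ?_⟩
      · exact image_subset_iff.2 fun i hi => mem_biUnion.2 ⟨i, hi, hft i hi⟩
      · rwa [card_image_of_injOn hf]
    · push Not at hall
      obtain ⟨W, hWS, hW⟩ := hall
      obtain ⟨i, hi⟩ : W.Nonempty := card_pos.1 ((Nat.zero_le _).trans_lt hW)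
      obtain ⟨b, hb⟩ := ht i (hWS hi)
      have hpos : 0 < #(W.biUnion t) := card_pos.2 ⟨b, mem_biUnion.2 ⟨i, hi, hb⟩⟩
      have herase : #(W.erase i) = #W - 1 := card_erase_of_mem hi
      have hsub : (W.erase i).biUnion t ⊆ W.biUnion t :=
        biUnion_subset_biUnion_of_subset_left t (erase_subset i W)
      obtain ⟨S', hS', h⟩ := ih (W.erase i) ((erase_ssubset hi).trans_subset hWS)
        (card_pos.1 (by omega)) (fun j hj => ht j (hWS (mem_of_mem_erase hj)))
        ((card_le_card hsub).trans (by omega))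
      exact ⟨S', hS'.trans ((erase_subset i W).trans hWS), h⟩

theorem exists_matching_of_injOn {S : Finset A} {f : A → B} (hf : Set.InjOn f S)
    (hs : ∀ u ∈ S, ∃ e ∈ s, l e = u ∧ r e = f u) :
    ∃ M ⊆ s, Set.InjOn l M ∧ Set.InjOn r M ∧ M.image l = S ∧ M.image r = S.image f := by
  rcases S.eq_empty_or_nonempty with rfl | ⟨u, hu⟩
  · exact ⟨∅, by simp, by simp, by simp, by simp, by simp⟩
  · have : Nonempty E := let ⟨e, _⟩ := hs u hu; ⟨e⟩
    choose! ψ hψs hψl hψr using hs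
    refine ⟨S.image ψ, image_subset_iff.2 hψs, ?_, ?_, ?_, ?_⟩
    · rw [coe_image]
      exact Set.InjOn.image_of_comp ((Set.injOn_id _).congr fun u hu => (hψl u hu).symm)
    · rw [coe_image]
      exact Set.InjOn.image_of_comp (hf.congr fun u hu => (hψr u hu).symm)
    · rw [image_image]
      exact (image_congr hψl).trans image_id
    · rw [image_image]
      exact image_congr hψr

/-- The `z`-ends of edges of `s` that have degree `d`. -/
noncomputable def verticesOfDegree (z : E → A) (s : Finset E) (d : ℕ) : Finset A :=
  {u ∈ s.image z | sideDegree z s u = d}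

theorem exists_matching_maxEndDegree_sdiff_lt {d : ℕ}
    (hr : ∀ e ∈ s, sideDegree r s (r e) ≤ d) (hne : (verticesOfDegree l s d).Nonempty)
    (hcard : #(verticesOfDegree r s d) ≤ #(verticesOfDegree l s d)) :
    ∃ M ⊆ s, M.Nonempty ∧ Set.InjOn l M ∧ Set.InjOn r M ∧
      ∀ e ∈ s, l e ∈ M.image l → maxEndDegree l r (s \ M) e < maxEndDegree l r s e := by
  set P := verticesOfDegree l s d
  set N : A → Finset B := fun u => {e ∈ s | l e = u ∧ sideDegree r s (r e) = d}.image r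
  have hPdeg {e : E} (he : l e ∈ P) : sideDegree l s (l e) = d := (mem_filter.1 he).2
  have hr_cases {e : E} (he : e ∈ s) (heP : l e ∈ P) :
      sideDegree r s (r e) < sideDegree l s (l e) ∨ r e ∈ N (l e) := by
    rw [hPdeg heP]
    exact (hr e he).lt_or_eq.imp_right fun h => mem_image_of_mem r (mem_filter.2 ⟨he, rfl, h⟩)
  by_cases hNe : ∀ u ∈ P, (N u).Nonempty
  · have hNP : P.biUnion N ⊆ verticesOfDegree r s d := biUnion_subset.2 fun u _ =>
      image_subset_iff.2 fun e he => mem_filter.2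
        ⟨mem_image_of_mem r (mem_filter.1 he).1, (mem_filter.1 he).2.2⟩
    obtain ⟨S, hSP, hSne, f, hf, hfN, hfS⟩ :=
      exists_injOn_image_eq_biUnion N hne hNe ((card_le_card hNP).trans hcard)
    obtain ⟨M, hMs, hMl, hMr, hMS, hMf⟩ := exists_matching_of_injOn hf fun u hu => by
      obtain ⟨e, he, hre⟩ := mem_image.1 (hfN u hu)
      exact ⟨e, (mem_filter.1 he).1, (mem_filter.1 he).2.1, hre⟩
    refine ⟨M, hMs, image_nonempty.1 (hMS ▸ hSne), hMl, hMr, fun e he hel => ?_⟩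
    refine maxEndDegree_sdiff_lt hMs hel ?_
    rw [hMS] at hel
    rw [hMf, hfS]
    exact (hr_cases he (hSP hel)).imp_right fun h => mem_biUnion.2 ⟨_, hel, h⟩
  · push Not at hNe
    obtain ⟨u, hu, hNu⟩ := hNe
    obtain ⟨e₀, he₀, rfl⟩ := mem_image.1 (mem_filter.1 hu).1
    refine ⟨{e₀}, by simpa using he₀, by simp, by simp, by simp, fun e he hel => ?_⟩
    refine maxEndDegree_sdiff_lt (by simpa using he₀) hel (Or.inl ?_)
    rw [image_singleton, mem_singleton] at hel
    exact (hr_cases he (hel ▸ hu)).resolve_right (by simp [hel, hNu])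

/-- A pair of rankings, `p` at the left vertices and `q` at the right vertices, to which Galvin's
argument applies with lists as large as the larger end degree of each edge. -/
structure IsGalvinRanking (l : E → A) (r : E → B) (s : Finset E) (p q : E → ℕ) : Prop where
  left : IsProperAlong l p s
  right : IsProperAlong r q s
  rank_add_rank_lt : ∀ e ∈ s, rank l p s e + rank r q s e < maxEndDegree l r s e

theorem IsGalvinRanking.swap (h : IsGalvinRanking l r s p q) : IsGalvinRanking r l s q p where
  left := h.right
  right := h.left
  rank_add_rank_lt e he := by
    rw [add_comm, maxEndDegree_comm]
    exact h.rank_add_rank_lt e he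

/-- Ranking `M` first at the left vertices and last at the right vertices increases only the left
ranks, by one, of the edges that share their left end with an edge of `M`. -/
theorem IsGalvinRanking.of_sdiff (h : IsGalvinRanking l r (s \ M) p q) (hl : Set.InjOn l M)
    (hr : Set.InjOn r M)
    (hM : ∀ e ∈ s, l e ∈ M.image l → maxEndDegree l r (s \ M) e < maxEndDegree l r s e) :
    IsGalvinRanking l r s (M.piecewise 0 (p + 1)) (M.piecewise (fun _ => s.sup q + 1) q) where
  left := by
    have hp : IsProperAlong l (p + 1) (s \ M) := fun e he f hf hef hpef =>
      h.left he hf hef (Nat.succ.inj hpef)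
    exact hp.piecewise_const hl fun e _ => Nat.succ_ne_zero (p e)
  right := h.right.piecewise_const hr fun e he =>
    (Nat.lt_succ_of_le (le_sup (mem_sdiff.1 he).1)).ne
  rank_add_rank_lt e he := by
    by_cases heM : e ∈ M
    · rw [rank_piecewise_zero_of_mem heM, zero_add]
      exact (rank_lt_sideDegree he).trans_le (le_max_right _ _)
    · have hrank_l := rank_piecewise_zero_le (z := l) (p := p) (s := s) heM
      have hrank_r := rank_piecewise_const_le (z := r) (s := s) heM
        ((le_sup (f := q) he).trans (Nat.le_add_right _ 1))
      have hlt := h.rank_add_rank_lt e (mem_sdiff.2 ⟨he, heM⟩)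
      have hle := maxEndDegree_sdiff_le (l := l) (r := r) s M e
      rcases Nat.eq_zero_or_pos (sideDegree l M (l e)) with hzero | hpos
      · omega
      · have := hM e he (sideDegree_pos.1 hpos)
        have := sideDegree_le_one hl (l e)
        omega

theorem exists_isGalvinRanking (l : E → A) (r : E → B) (s : Finset E) :
    ∃ p q : E → ℕ, IsGalvinRanking l r s p q := by
  induction s using Finset.strongInduction with
  | H s ih =>
    rcases s.eq_empty_or_nonempty with rfl | hs
    · exact ⟨0, 0, by simp [IsProperAlong], by simp [IsProperAlong], by simp⟩
    obtain ⟨e, he, hmax⟩ := exists_max_image s (maxEndDegree l r s) hs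
    set d := maxEndDegree l r s e
    have hl : ∀ f ∈ s, sideDegree l s (l f) ≤ d := fun f hf => (le_max_left _ _).trans (hmax f hf)
    have hr : ∀ f ∈ s, sideDegree r s (r f) ≤ d := fun f hf => (le_max_right _ _).trans (hmax f hf)
    have hpos : 0 < #(verticesOfDegree l s d) ∨ 0 < #(verticesOfDegree r s d) := by
      rcases max_choice (sideDegree l s (l e)) (sideDegree r s (r e)) with h | h
      · exact Or.inl (card_pos.2 ⟨l e, mem_filter.2 ⟨mem_image_of_mem l he, h.symm⟩⟩)
      · exact Or.inr (card_pos.2 ⟨r e, mem_filter.2 ⟨mem_image_of_mem r he, h.symm⟩⟩)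
    rcases le_total #(verticesOfDegree r s d) #(verticesOfDegree l s d) with hc | hc
    · obtain ⟨M, hMs, hMne, hMl, hMr, hM⟩ :=
        exists_matching_maxEndDegree_sdiff_lt hr (card_pos.1 (by omega)) hc
      obtain ⟨p, q, hpq⟩ := ih _ (sdiff_ssubset hMs hMne)
      exact ⟨_, _, hpq.of_sdiff hMl hMr hM⟩
    · obtain ⟨M, hMs, hMne, hMr, hMl, hM⟩ :=
        exists_matching_maxEndDegree_sdiff_lt hl (card_pos.1 (by omega)) hc
      obtain ⟨p, q, hpq⟩ := ih _ (sdiff_ssubset hMs hMne)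
      exact ⟨_, _, (hpq.swap.of_sdiff hMr hMl hM).swap⟩

/-- The bipartite theorem of Borodin, Kostochka and Woodall. -/
theorem exists_isBipartiteListColoring [Nonempty α] (l : E → A) (r : E → B) (s : Finset E)
    (L : E → Finset α) (hL : ∀ e ∈ s, maxEndDegree l r s e ≤ #(L e)) :
    ∃ c : E → α, IsBipartiteListColoring l r s L c := by
  obtain ⟨p, q, hpq⟩ := exists_isGalvinRanking l r s
  exact exists_isBipartiteListColoring_of_rank hpq.left hpq.right L fun e he =>
    (hpq.rank_add_rank_lt e he).trans_le (hL e he)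

/-- Group the colours of a König colouring with `a + b` colours into `b` and `a`. -/
theorem exists_subset_sideDegree_le (l : E → A) (r : E → B) (s : Finset E) (a b : ℕ)
    (hl : ∀ u, sideDegree l s u ≤ a + b) (hr : ∀ w, sideDegree r s w ≤ a + b) :
    ∃ D ⊆ s, (∀ u, sideDegree l D u ≤ b) ∧ (∀ w, sideDegree r D w ≤ b) ∧
      (∀ u, sideDegree l (s \ D) u ≤ a) ∧ ∀ w, sideDegree r (s \ D) w ≤ a := by
  obtain ⟨c, hc⟩ := exists_isBipartiteListColoring l r s (fun _ => range (a + b)) fun e _ => by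
    rw [card_range]
    exact max_le (hl _) (hr _)
  set D := {e ∈ s | c e < b} with hD
  have hDs : D ⊆ s := filter_subset _ _
  have hDc : ∀ e ∈ D, c e ∈ range b := fun e he => mem_range.2 (mem_filter.1 he).2
  have hsDc : ∀ e ∈ s \ D, c e ∈ Ico b (a + b) := fun e he => by
    have := mem_range.1 (hc.mem e (mem_sdiff.1 he).1)
    simp only [hD, mem_sdiff, mem_filter, mem_Ico] at he ⊢
    exact ⟨not_lt.1 fun h => he.2 ⟨he.1, h⟩, this⟩
  have hIco : #(Ico b (a + b)) = a := by rw [Nat.card_Ico, Nat.add_sub_cancel]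
  refine ⟨D, hDs, ?_, ?_, ?_, ?_⟩
  · exact fun u => ((hc.left.mono hDs).sideDegree_le hDc u).trans_eq (card_range b)
  · exact fun w => ((hc.right.mono hDs).sideDegree_le hDc w).trans_eq (card_range b)
  · exact fun u => ((hc.left.mono sdiff_subset).sideDegree_le hsDc u).trans_eq hIco
  · exact fun w => ((hc.right.mono sdiff_subset).sideDegree_le hsDc w).trans_eq hIco

theorem exists_matching_of_sideDegree_le_succ (l : E → A) (r : E → B) (s : Finset E) (a : ℕ)
    (hl : ∀ u, sideDegree l s u ≤ a + 1) (hr : ∀ w, sideDegree r s w ≤ a + 1) :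
    ∃ M ⊆ s, Set.InjOn l M ∧ Set.InjOn r M ∧ ∀ u, a < sideDegree l s u → u ∈ M.image l := by
  obtain ⟨M, hMs, hMl, hMr, hsl, -⟩ := exists_subset_sideDegree_le l r s a 1 hl hr
  refine ⟨M, hMs, injOn_of_sideDegree_le_one hMl, injOn_of_sideDegree_le_one hMr, fun u hu => ?_⟩
  have := hsl u
  have := sideDegree_sdiff_add (z := l) hMs u
  exact sideDegree_pos.1 (by omega)

theorem filter_piecewise_eq_subset (s D : Finset E) (c₁ c₂ : E → α) (a : α) :
    {e ∈ s | D.piecewise c₁ c₂ e = a} ⊆ {e ∈ D | c₁ e = a} ∪ {e ∈ s \ D | c₂ e = a} := by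
  intro e he
  obtain ⟨hes, hea⟩ := mem_filter.1 he
  by_cases heD : e ∈ D
  · exact mem_union_left _ (mem_filter.2 ⟨heD, by simpa [heD] using hea⟩)
  · exact mem_union_right _ (mem_filter.2 ⟨mem_sdiff.2 ⟨hes, heD⟩, by simpa [heD] using hea⟩)

theorem exists_bipartite_frugal_list_coloring [Nonempty α] (l : E → A) (r : E → B) (s : Finset E)
    (L : E → Finset α) (t ℓ : ℕ) (hl : ∀ u, sideDegree l s u ≤ t * ℓ)
    (hr : ∀ w, sideDegree r s w ≤ t * ℓ) (hL : ∀ e ∈ s, t ≤ #(L e)) :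
    ∃ c : E → α, (∀ e ∈ s, c e ∈ L e) ∧ ∀ a, (∀ u, sideDegree l {e ∈ s | c e = a} u ≤ ℓ) ∧
      ∀ w, sideDegree r {e ∈ s | c e = a} w ≤ ℓ := by
  induction ℓ generalizing s with
  | zero =>
    have hs (e : E) : e ∉ s := fun he =>
      (hl (l e)).not_gt (sideDegree_pos.2 (mem_image_of_mem l he))
    exact ⟨fun _ => Classical.arbitrary α, fun e he => absurd he (hs e), fun a =>
      ⟨fun u => (sideDegree_mono (filter_subset _ _) u).trans (hl u),
        fun w => (sideDegree_mono (filter_subset _ _) w).trans (hr w)⟩⟩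
  | succ ℓ ih =>
    obtain ⟨D, hDs, hDl, hDr, hsl, hsr⟩ := exists_subset_sideDegree_le l r s (t * ℓ) t hl hr
    obtain ⟨c₁, hc₁⟩ := exists_isBipartiteListColoring l r D L fun e he =>
      (max_le (hDl _) (hDr _)).trans (hL e (hDs he))
    obtain ⟨c₂, hc₂, hc₂ℓ⟩ := ih (s \ D) hsl hsr fun e he => hL e (mem_sdiff.1 he).1
    refine ⟨D.piecewise c₁ c₂, fun e he => ?_, fun a => ⟨fun u => ?_, fun w => ?_⟩⟩
    · by_cases heD : e ∈ D
      · simpa [heD] using hc₁.mem e heD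
      · simpa [heD] using hc₂ e (mem_sdiff.2 ⟨he, heD⟩)
    · have := (sideDegree_mono (z := l) (filter_piecewise_eq_subset s D c₁ c₂ a) u).trans
        (sideDegree_union_le _ _ u)
      have := hc₁.left.sideDegree_filter_eq_le_one a u
      have := (hc₂ℓ a).1 u
      omega
    · have := (sideDegree_mono (z := r) (filter_piecewise_eq_subset s D c₁ c₂ a) w).trans
        (sideDegree_union_le _ _ w)
      have := hc₁.right.sideDegree_filter_eq_le_one a w
      have := (hc₂ℓ a).2 w
      omega

end Bipartite

/-! ### Balanced orientations -/

section Orientation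

variable {V E : Type*} {ends : E → Sym2 V} {s : Finset E} {x y : E → V}

/-- An orientation of the edges `s` of a multigraph (loops allowed), where `e` is directed from
`x e` to `y e`, with in- and out-degrees differing by at most one at each vertex. -/
structure IsBalancedOrientation (ends : E → Sym2 V) (s : Finset E) (x y : E → V) : Prop where
  ends_eq : ∀ e ∈ s, ends e = s(x e, y e)
  out_le : ∀ v, sideDegree x s v ≤ sideDegree y s v + 1
  in_le : ∀ v, sideDegree y s v ≤ sideDegree x s v + 1

theorem IsBalancedOrientation.swap (h : IsBalancedOrientation ends s x y) :
    IsBalancedOrientation ends s y x where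
  ends_eq e he := (h.ends_eq e he).trans Sym2.eq_swap
  out_le := h.in_le
  in_le := h.out_le

theorem sideDegree_update_insert {f : E} (hf : f ∉ s) (u v : V) :
    sideDegree (Function.update x f u) (insert f s) v =
      sideDegree x s v + if u = v then 1 else 0 := by
  have hs : {e ∈ s | Function.update x f u e = v} = {e ∈ s | x e = v} :=
    filter_congr fun e he => by rw [Function.update_of_ne (ne_of_mem_of_not_mem he hf)]
  rw [sideDegree, filter_insert, Function.update_self, hs]
  split_ifs
  · exact card_insert_of_notMem fun h => hf (mem_filter.1 h).1
  · rfl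

/-- Replacing the edges `e`, `f` from `a` to `v` and from `v` to `b` by one edge from `a` to `b`
does not change the difference of in- and out-degree anywhere. -/
theorem IsBalancedOrientation.of_lift {e f : E} {v : V} (he : e ∈ s) (hf : f ∈ s) (hef : e ≠ f)
    (h : IsBalancedOrientation (Function.update ends e s(x e, y e)) (s.erase f) x y)
    (hends_e : ends e = s(x e, v)) (hends_f : ends f = s(v, y e)) :
    IsBalancedOrientation ends s (Function.update x f v)
      (Function.update (Function.update y e v) f (y e)) := by
  have hes : e ∈ s.erase f := mem_erase.2 ⟨hef, he⟩
  have hx (w : V) : sideDegree (Function.update x f v) s w =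
      sideDegree x (s.erase f) w + if v = w then 1 else 0 := by
    rw [← sideDegree_update_insert (notMem_erase f s), insert_erase hf]
  have hy (w : V) : sideDegree (Function.update (Function.update y e v) f (y e)) s w =
      sideDegree y (s.erase f) w + if v = w then 1 else 0 := by
    have hy_e := sideDegree_update_insert (x := y) (notMem_erase e (s.erase f)) (y e) w
    have hv := sideDegree_update_insert (x := y) (notMem_erase e (s.erase f)) v w
    have hb := sideDegree_update_insert (x := Function.update y e v) (notMem_erase f s) (y e) w
    rw [insert_erase hes] at hy_e hv
    rw [Function.update_eq_self] at hy_e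
    rw [insert_erase hf] at hb
    omega
  refine ⟨fun g hg => ?_, fun w => ?_, fun w => ?_⟩
  · rcases eq_or_ne g f with rfl | hgf
    · simpa using hends_f
    rcases eq_or_ne g e with rfl | hge
    · simpa [hgf] using hends_e
    · simpa [hgf, hge] using h.ends_eq g (mem_erase.2 ⟨hgf, hg⟩)
  · have := h.out_le w
    rw [hx, hy]
    omega
  · have := h.in_le w
    rw [hx, hy]
    omega

theorem isBalancedOrientation_of_injOn (h : ∀ e ∈ s, ends e = s(x e, y e)) (hx : Set.InjOn x s)
    (hy : Set.InjOn y s) : IsBalancedOrientation ends s x y where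
  ends_eq := h
  out_le v := (sideDegree_le_one hx v).trans (Nat.le_add_left 1 _)
  in_le v := (sideDegree_le_one hy v).trans (Nat.le_add_left 1 _)

theorem exists_isBalancedOrientation (ends : E → Sym2 V) (s : Finset E) :
    ∃ x y : E → V, IsBalancedOrientation ends s x y := by
  induction s using Finset.strongInduction generalizing ends with
  | H s ih =>
    by_cases hs : ∃ e ∈ s, ∃ f ∈ s, e ≠ f ∧ ∃ v, v ∈ ends e ∧ v ∈ ends f
    · obtain ⟨e, he, f, hf, hef, v, hve, hvf⟩ := hs
      obtain ⟨a, ha⟩ := Sym2.mem_iff_exists.1 hve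
      obtain ⟨b, hb⟩ := Sym2.mem_iff_exists.1 hvf
      obtain ⟨x, y, h⟩ := ih (s.erase f) (erase_ssubset hf) (Function.update ends e s(a, b))
      have hab : s(a, b) = s(x e, y e) := by
        simpa using h.ends_eq e (mem_erase.2 ⟨hef, he⟩)
      rcases Sym2.eq_iff.1 hab with ⟨rfl, rfl⟩ | ⟨rfl, rfl⟩
      · exact ⟨_, _, h.of_lift he hf hef (ha.trans Sym2.eq_swap) hb⟩
      · exact ⟨_, _, h.swap.of_lift he hf hef (ha.trans Sym2.eq_swap) hb⟩
    · have hxy : ∀ e, ∃ x y, ends e = s(x, y) := fun e => (ends e).ind fun x y => ⟨x, y, rfl⟩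
      choose x y hxy using hxy
      have hinj {z : E → V} (hz : ∀ e, z e ∈ ends e) : Set.InjOn z s := fun e he f hf h => by
        by_contra hef
        exact hs ⟨e, he, f, hf, hef, z e, hz e, h ▸ hz f⟩
      exact ⟨x, y, isBalancedOrientation_of_injOn (fun e _ => hxy e)
        (hinj fun e => by simp [hxy]) (hinj fun e => by simp [hxy])⟩

end Orientation

/-! ### List colouring of multigraphs -/

section General

variable {V E α : Type*} (G : Multigraph V E) {s t R T : Finset E} {x y : E → V}
  {L : E → Finset α}

/-- The edges in `s` that are incident with `v`. -/
noncomputable def edgesAt (s : Finset E) (v : V) : Finset E :=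
  {e ∈ s | v ∈ G.ends e}

variable {G}

theorem mem_edgesAt {v : V} {e : E} : e ∈ G.edgesAt s v ↔ e ∈ s ∧ v ∈ G.ends e :=
  mem_filter

theorem edgesAt_mono (h : s ⊆ t) (v : V) : G.edgesAt s v ⊆ G.edgesAt t v :=
  filter_subset_filter _ h

theorem card_edgesAt_union_le (s t : Finset E) (v : V) :
    #(G.edgesAt (s ∪ t) v) ≤ #(G.edgesAt s v) + #(G.edgesAt t v) := by
  rw [edgesAt, filter_union]
  exact card_union_le _ _

theorem card_edgesAt_sdiff_add (h : t ⊆ s) (v : V) :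
    #(G.edgesAt (s \ t) v) + #(G.edgesAt t v) = #(G.edgesAt s v) := by
  rw [edgesAt, edgesAt, ← card_union_of_disjoint (disjoint_filter_filter sdiff_disjoint),
    ← filter_union, sdiff_union_of_subset h, edgesAt]

theorem card_edgesAt_eq_add (h : ∀ e ∈ s, G.ends e = s(x e, y e)) (v : V) :
    #(G.edgesAt s v) = sideDegree x s v + sideDegree y s v := by
  have hfilter : G.edgesAt s v = {e ∈ s | x e = v} ∪ {e ∈ s | y e = v} := by
    rw [← filter_or]
    exact filter_congr fun e he => by rw [h e he, Sym2.mem_iff, eq_comm, eq_comm (a := v)]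
  rw [hfilter, card_union_of_disjoint, sideDegree, sideDegree]
  refine disjoint_filter.2 fun e he hx hy => G.no_loops e ?_
  rw [h e he, hx, hy]
  exact Sym2.mk_isDiag_iff.2 rfl

/-- `c` is a proper colouring of the edges `s` from the lists `L`. -/
structure IsProperListColoring (G : Multigraph V E) (s : Finset E) (L : E → Finset α)
    (c : E → α) : Prop where
  mem : ∀ e ∈ s, c e ∈ L e
  injOn : ∀ v, Set.InjOn c (G.edgesAt s v)

theorem IsProperListColoring.card_edgesAt_filter_le_one {c : E → α}
    (h : G.IsProperListColoring s L c) (a : α) (v : V) :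
    #(G.edgesAt {e ∈ s | c e = a} v) ≤ 1 :=
  card_le_one.2 fun e he f hf => by
    simp only [mem_edgesAt, mem_filter] at he hf
    exact h.injOn v (mem_edgesAt.2 ⟨he.1.1, he.2⟩) (mem_edgesAt.2 ⟨hf.1.1, hf.2⟩)
      (he.1.2.trans hf.1.2.symm)

variable (G) in
/-- The colours that `e` must avoid when the colours in `F v` may not be used at the vertex `v`. -/
noncomputable def forbiddenColors (F : V → Finset α) (e : E) : Finset α :=
  (G.ends e).toFinset.biUnion F

theorem mem_forbiddenColors {F : V → Finset α} {e : E} {v : V} {a : α} (hv : v ∈ G.ends e)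
    (ha : a ∈ F v) : a ∈ G.forbiddenColors F e :=
  mem_biUnion.2 ⟨v, Sym2.mem_toFinset.2 hv, ha⟩

theorem card_forbiddenColors_le {F : V → Finset α} {e : E} {u w : V} (h : G.ends e = s(u, w)) :
    #(G.forbiddenColors F e) ≤ #(F u) + #(F w) := by
  rw [forbiddenColors, h, Sym2.toFinset_mk_eq, biUnion_insert, singleton_biUnion]
  exact card_union_le _ _

theorem IsProperListColoring.union {c₁ c₂ : E → α} (h₁ : G.IsProperListColoring R L c₁)
    (h₂ : G.IsProperListColoring T
      (fun e => L e \ G.forbiddenColors (fun v => (G.edgesAt R v).image c₁) e) c₂) :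
    G.IsProperListColoring (R ∪ T) L (R.piecewise c₁ c₂) where
  mem e he := by
    by_cases heR : e ∈ R
    · simpa [heR] using h₁.mem e heR
    · simpa [heR] using (mem_sdiff.1 (h₂.mem e ((mem_union.1 he).resolve_left heR))).1
  injOn v e he f hf hc := by
    have hne {e f : E} (he : e ∈ R) (hve : v ∈ G.ends e) (hf : f ∈ T) (hvf : v ∈ G.ends f) :
        c₁ e ≠ c₂ f := fun h => (mem_sdiff.1 (h₂.mem f hf)).2 <|
      mem_forbiddenColors hvf (mem_image.2 ⟨e, mem_edgesAt.2 ⟨he, hve⟩, h⟩)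
    rw [mem_coe, mem_edgesAt, mem_union] at he hf
    by_cases heR : e ∈ R <;> by_cases hfR : f ∈ R <;>
      simp only [heR, hfR, piecewise_eq_of_mem, piecewise_eq_of_notMem, not_false_eq_true,
        true_or, false_or] at hc he hf
    · exact h₁.injOn v (mem_edgesAt.2 ⟨heR, he.2⟩) (mem_edgesAt.2 ⟨hfR, hf.2⟩) hc
    · exact absurd hc (hne heR he.2 hf.1 hf.2)
    · exact absurd hc.symm (hne hfR hf.2 he.1 he.2)
    · exact h₂.injOn v (mem_edgesAt.2 he) (mem_edgesAt.2 hf) hc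

theorem exists_isProperListColoring_of_edgesAt_add_edgesAt_le [Nonempty α]
    (hL : ∀ e ∈ s, ∀ u w, G.ends e = s(u, w) → #(G.edgesAt s u) + #(G.edgesAt s w) ≤ #(L e)) :
    ∃ c, G.IsProperListColoring s L c := by
  induction s using Finset.induction_on with
  | empty => exact ⟨fun _ => Classical.arbitrary α, by simp, by simp [edgesAt]⟩
  | insert f s hf ih =>
    obtain ⟨c, hc⟩ := ih fun e he u w hends =>
      (add_le_add (card_le_card (edgesAt_mono (subset_insert f s) u))
        (card_le_card (edgesAt_mono (subset_insert f s) w))).trans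
      (hL e (mem_insert_of_mem he) u w hends)
    set F : V → Finset α := fun v => (G.edgesAt s v).image c
    obtain ⟨u, w, huw⟩ : ∃ u w, G.ends f = s(u, w) := (G.ends f).ind fun u w => ⟨u, w, rfl⟩
    have hlt {v : V} (hv : v ∈ G.ends f) : #(F v) < #(G.edgesAt (insert f s) v) := by
      refine card_image_le.trans_lt (card_lt_card ⟨edgesAt_mono (subset_insert f s) v, fun h => ?_⟩)
      exact hf (mem_edgesAt.1 (h (mem_edgesAt.2 ⟨mem_insert_self f s, hv⟩))).1
    have hcard : #(G.forbiddenColors F f) < #(L f) :=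
      (card_forbiddenColors_le huw).trans_lt <|
        (add_lt_add (hlt (huw ▸ Sym2.mem_mk_left u w)) (hlt (huw ▸ Sym2.mem_mk_right u w))).trans_le
          (hL f (mem_insert_self f s) u w huw)
    obtain ⟨a, ha, haF⟩ := exists_mem_notMem_of_card_lt_card hcard
    have hfc : G.IsProperListColoring {f} (fun e => L e \ G.forbiddenColors F e) fun _ => a := by
      refine ⟨fun e he => ?_, fun v e he e' he' _ => ?_⟩
      · rw [mem_singleton.1 he]
        exact mem_sdiff.2 ⟨ha, haF⟩
      · rw [mem_singleton.1 (mem_edgesAt.1 he).1, mem_singleton.1 (mem_edgesAt.1 he').1]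
    exact ⟨_, union_singleton f s ▸ hc.union hfc⟩

variable (G) in
/-- The edges in `s` whose ends lie on the same side of the cut `σ`. -/
noncomputable def uncutEdges (σ : V → Bool) (s : Finset E) : Finset E :=
  {e ∈ s | ((G.ends e).map σ).IsDiag}

theorem uncutEdges_update_not_subset (σ : V → Bool) (s : Finset E) (v : V) :
    G.uncutEdges (Function.update σ v (!σ v)) s ⊆
      (G.edgesAt s v \ G.uncutEdges σ s) ∪ (G.uncutEdges σ s \ G.edgesAt s v) := by
  intro e he
  obtain ⟨hes, hdiag⟩ := mem_filter.1 he
  by_cases hv : v ∈ G.ends e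
  · refine mem_union_left _ (mem_sdiff.2 ⟨mem_edgesAt.2 ⟨hes, hv⟩, fun h => ?_⟩)
    obtain ⟨w, hw⟩ := Sym2.mem_iff_exists.1 hv
    have hwv : w ≠ v := by
      rintro rfl
      exact G.no_loops e (hw ▸ Sym2.mk_isDiag_iff.2 rfl)
    have hσ := (mem_filter.1 h).2
    rw [hw, Sym2.map_mk, Sym2.mk_isDiag_iff] at hdiag hσ
    rw [Function.update_self, Function.update_of_ne hwv, ← hσ] at hdiag
    exact Bool.not_ne_self _ hdiag
  · refine mem_union_right _ (mem_sdiff.2 ⟨mem_filter.2 ⟨hes, ?_⟩, fun h => hv (mem_edgesAt.1 h).2⟩)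
    rwa [Sym2.map_congr fun w hw => Function.update_of_ne (ne_of_mem_of_not_mem hw hv) _ _] at hdiag

/-- A cut with as few uncut edges as possible has this property, since no vertex can gain by
changing sides. -/
theorem exists_card_edgesAt_uncutEdges_le (G : Multigraph V E) (s : Finset E) :
    ∃ σ : V → Bool, ∀ v, 2 * #(G.edgesAt (G.uncutEdges σ s) v) ≤ #(G.edgesAt s v) := by
  let f (σ : V → Bool) : ℕ := #(G.uncutEdges σ s)
  set σ := Function.argmin f
  refine ⟨σ, fun v => ?_⟩
  have hmin : #(G.uncutEdges σ s) ≤ _ :=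
    (Function.argmin_le f (Function.update σ v (!σ v))).trans <|
      (card_le_card (uncutEdges_update_not_subset σ s v)).trans (card_union_le _ _)
  have hinter : G.edgesAt s v ∩ G.uncutEdges σ s = G.edgesAt (G.uncutEdges σ s) v := by
    ext e
    simp only [mem_inter, mem_edgesAt, uncutEdges, mem_filter]
    tauto
  have hcut := card_inter_add_card_sdiff (G.edgesAt s v) (G.uncutEdges σ s)
  have huncut := card_inter_add_card_sdiff (G.uncutEdges σ s) (G.edgesAt s v)
  rw [inter_comm] at huncut
  rw [hinter] at hcut huncut
  omega

theorem exists_isProperListColoring_of_cut [Nonempty α] (σ : V → Bool)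
    (hσ : ∀ e ∈ s, ¬ ((G.ends e).map σ).IsDiag)
    (hL : ∀ e ∈ s, ∀ v ∈ G.ends e, #(G.edgesAt s v) ≤ #(L e)) :
    ∃ c, G.IsProperListColoring s L c := by
  have hlr : ∀ e, ∃ u w, G.ends e = s(u, w) ∧ (e ∈ s → σ u = true ∧ σ w = false) := fun e => by
    obtain ⟨u, w, huw⟩ : ∃ u w, G.ends e = s(u, w) := (G.ends e).ind fun u w => ⟨u, w, rfl⟩
    by_cases he : e ∈ s
    · have := hσ e he
      rw [huw, Sym2.map_mk, Sym2.mk_isDiag_iff] at this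
      cases hu : σ u <;> cases hw : σ w <;> simp only [hu, hw, not_true_eq_false] at this
      · exact ⟨w, u, huw.trans Sym2.eq_swap, fun _ => ⟨hw, hu⟩⟩
      · exact ⟨u, w, huw, fun _ => ⟨hu, hw⟩⟩
    · exact ⟨u, w, huw, fun h => absurd h he⟩
  choose l r hends hside using hlr
  have hdeg (v : V) := card_edgesAt_eq_add (fun e (_ : e ∈ s) => hends e) v
  obtain ⟨c, hc⟩ := exists_isBipartiteListColoring l r s L fun e he => by
    have hl := hL e he (l e) (by simp [hends])
    have hr := hL e he (r e) (by simp [hends])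
    rw [hdeg] at hl hr
    exact max_le (by omega) (by omega)
  refine ⟨c, hc.mem, fun v e he f hf hef => ?_⟩
  obtain ⟨hes, hve⟩ := mem_edgesAt.1 he
  obtain ⟨hfs, hvf⟩ := mem_edgesAt.1 hf
  rw [hends, Sym2.mem_iff] at hve hvf
  rcases hve with hve | hve <;> rcases hvf with hvf | hvf
  · exact hc.left hes hfs (hve.symm.trans hvf) hef
  · cases (hside e hes).1.symm.trans ((congrArg σ (hve.symm.trans hvf)).trans (hside f hfs).2)
  · cases (hside e hes).2.symm.trans ((congrArg σ (hve.symm.trans hvf)).trans (hside f hfs).1)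
  · exact hc.right hes hfs (hve.symm.trans hvf) hef

/-- A theorem of Borodin, Kostochka and Woodall: the uncut edges of a maximum cut are coloured
greedily, and the cut edges by the bipartite theorem from the remaining colours. -/
theorem exists_isProperListColoring [Nonempty α]
    (hL : ∀ e ∈ s, ∀ u w, G.ends e = s(u, w) →
      #(G.edgesAt s u) + #(G.edgesAt s w) / 2 ≤ #(L e)) :
    ∃ c, G.IsProperListColoring s L c := by
  obtain ⟨σ, hσ⟩ := exists_card_edgesAt_uncutEdges_le G s
  set R := G.uncutEdges σ s
  have hRs : R ⊆ s := filter_subset _ _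
  obtain ⟨c₁, hc₁⟩ := exists_isProperListColoring_of_edgesAt_add_edgesAt_le (s := R) (L := L)
    fun e he u w h => by
      have := hL e (hRs he) u w h
      have := hσ u
      have := hσ w
      omega
  set F : V → Finset α := fun v => (G.edgesAt R v).image c₁
  have hcut : ∀ e ∈ s \ R, ∀ v ∈ G.ends e,
      #(G.edgesAt (s \ R) v) ≤ #(L e \ G.forbiddenColors F e) := by
    intro e he v hv
    obtain ⟨w, hw⟩ := Sym2.mem_iff_exists.1 hv
    have hsplit := card_edgesAt_sdiff_add (G := G) hRs v
    have hforbidden := card_forbiddenColors_le (F := F) hw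
    have hFv : #(F v) ≤ _ := card_image_le
    have hFw : #(F w) ≤ _ := card_image_le
    have hlist := hL e (mem_sdiff.1 he).1 v w hw
    have hdiff := le_card_sdiff (G.forbiddenColors F e) (L e)
    have := hσ w
    omega
  obtain ⟨c₂, hc₂⟩ := exists_isProperListColoring_of_cut σ
    (fun e he h => (mem_sdiff.1 he).2 (mem_filter.2 ⟨(mem_sdiff.1 he).1, h⟩)) hcut
  exact ⟨_, union_sdiff_of_subset hRs ▸ hc₁.union hc₂⟩

/-! ### Frugal colourings -/

/-- An orientation of `s` from `x` to `y` with a set `M ⊆ D ⊆ s` such that `s \ D` has in- and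
out-degrees at most `a`, hence degrees at most `2 * a`, while `D` has degrees at most `r + 1`. The
edges of `M` form a matching at their heads and at their tails. In a colouring, an edge of `M` will
count towards the degree bound `r` of `D \ M` at its head, and towards the degree bound `2 * a`
of `s \ D` at its tail. -/
structure IsMatchingDecomposition (G : Multigraph V E) (s D M : Finset E) (x y : E → V)
    (a r : ℕ) : Prop where
  ends_eq : ∀ e ∈ s, G.ends e = s(x e, y e)
  subset_left : D ⊆ s
  subset_right : M ⊆ D
  out_le : ∀ v, sideDegree x (s \ D) v ≤ a
  in_le : ∀ v, sideDegree y (s \ D) v ≤ a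
  injOn_tail : Set.InjOn x M
  injOn_head : Set.InjOn y M
  card_tail_lt : ∀ e ∈ M, #(G.edgesAt (s \ D) (x e)) < 2 * a
  card_add_head_le : ∀ v, #(G.edgesAt (D \ M) v) + sideDegree y M v ≤ r

theorem exists_isMatchingDecomposition {a r : ℕ} (hdeg : ∀ v, #(G.edgesAt s v) ≤ 2 * a + r) :
    ∃ D M x y, G.IsMatchingDecomposition s D M x y a r := by
  obtain ⟨x, y, hxy⟩ := exists_isBalancedOrientation G.ends s
  have hends {t : Finset E} (ht : t ⊆ s) (v : V) :=
    card_edgesAt_eq_add (G := G) (fun e he => hxy.ends_eq e (ht he)) v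
  have hside (v : V) : sideDegree x s v ≤ a + (r + 1) / 2 ∧ sideDegree y s v ≤ a + (r + 1) / 2 := by
    have := hdeg v
    have := hends Subset.rfl v
    have := hxy.out_le v
    have := hxy.in_le v
    omega
  obtain ⟨D, hDs, hDx, hDy, hsx, hsy⟩ :=
    exists_subset_sideDegree_le x y s a ((r + 1) / 2) (fun v => (hside v).1) fun v => (hside v).2
  obtain ⟨N, hND, hNx, hNy, hN⟩ := exists_matching_of_sideDegree_le_succ x y D ((r + 1) / 2 - 1)
    (fun v => (hDx v).trans (by omega)) fun v => (hDy v).trans (by omega)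
  set M := {e ∈ N | r < #(G.edgesAt D (x e))}
  have hMN : M ⊆ N := filter_subset _ _
  have hMD : M ⊆ D := hMN.trans hND
  refine ⟨D, M, x, y, hxy.ends_eq, hDs, hMD, hsx, hsy, hNx.mono hMN, hNy.mono hMN,
    fun e he => ?_, fun v => ?_⟩
  · have := (mem_filter.1 he).2
    have := card_edgesAt_sdiff_add (G := G) hDs (x e)
    have := hdeg (x e)
    omega
  · have hDv := hends hDs v
    have hMv := hends (hMD.trans hDs) v
    have hsplit := card_edgesAt_sdiff_add (G := G) hMD v
    rcases le_or_gt #(G.edgesAt D v) r with hle | hlt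
    · omega
    · have := hDx v
      have := hDy v
      obtain ⟨e, he, rfl⟩ := mem_image.1 (hN v (by omega))
      have heM : e ∈ M := mem_filter.2 ⟨he, hlt⟩
      have hMe : 0 < sideDegree x M (x e) := sideDegree_pos.2 (mem_image_of_mem x heM)
      omega

theorem exists_list_coloring_tails [Nonempty α] {M : Finset E} {c : E → α} {t m : ℕ}
    (hc : ∀ a v, #(G.edgesAt {e ∈ s | c e = a} v) ≤ m) (hx : Set.InjOn x M)
    (hM : ∀ e ∈ M, #(G.edgesAt s (x e)) < t * m) (hL : ∀ e ∈ M, t ≤ #(L e)) :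
    ∃ b : E → α, (∀ e ∈ M, b e ∈ L e) ∧
      ∀ a v, #(G.edgesAt {e ∈ s | c e = a} v) + sideDegree x {e ∈ M | b e = a} v ≤ m := by
  have hfree : ∀ e ∈ M, ∃ a ∈ L e, #(G.edgesAt {f ∈ s | c f = a} (x e)) < m := fun e he => by
    simp only [edgesAt, filter_comm (fun f => c f = _)]
    exact exists_card_fiber_lt_of_card_lt_mul
      ((hM e he).trans_le (Nat.mul_le_mul_right m (hL e he)))
  choose! b hbL hb using hfree
  refine ⟨b, hbL, fun a v => ?_⟩
  have hone := sideDegree_le_one (hx.mono (filter_subset (fun e => b e = a) M)) v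
  rcases Nat.eq_zero_or_pos (sideDegree x {e ∈ M | b e = a} v) with hzero | hpos
  · exact hzero ▸ hc a v
  · obtain ⟨e, he, rfl⟩ := mem_image.1 (sideDegree_pos.1 hpos)
    obtain ⟨heM, rfl⟩ := mem_filter.1 he
    exact (Nat.add_le_add_left hone _).trans (hb e heM)

theorem exists_list_coloring_heads [Nonempty α] {H M : Finset E} {b : E → α} {r : ℕ}
    (hy : Set.InjOn y M) (hdeg : ∀ v, #(G.edgesAt H v) + sideDegree y M v ≤ r)
    (hL : ∀ e ∈ H, r + (r + 1) / 2 ≤ #(L e)) :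
    ∃ c : E → α, (∀ e ∈ H, c e ∈ L e) ∧
      ∀ a v, #(G.edgesAt {e ∈ H | c e = a} v) + sideDegree y {e ∈ M | b e = a} v ≤ 1 := by
  set F : V → Finset α := fun v => {e ∈ M | y e = v}.image b
  have hF (v : V) : #(F v) ≤ sideDegree y M v := card_image_le
  obtain ⟨c, hc⟩ := exists_isProperListColoring (G := G) (s := H)
    (L := fun e => L e \ G.forbiddenColors F e) fun e he u w h => by
      have := hL e he
      have := le_card_sdiff (G.forbiddenColors F e) (L e)
      have := card_forbiddenColors_le (F := F) h
      have := hF u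
      have := hF w
      have := hdeg u
      have := hdeg w
      have := sideDegree_le_one hy w
      omega
  refine ⟨c, fun e he => (mem_sdiff.1 (hc.mem e he)).1, fun a v => ?_⟩
  have hcv := hc.card_edgesAt_filter_le_one a v
  have hbv := sideDegree_le_one (hy.mono (filter_subset (fun e => b e = a) M)) v
  have hdisj : #(G.edgesAt {e ∈ H | c e = a} v) = 0 ∨ sideDegree y {e ∈ M | b e = a} v = 0 := by
    by_contra! h
    obtain ⟨e, he⟩ := card_ne_zero.1 h.1
    obtain ⟨f, hf, rfl⟩ := mem_image.1 (sideDegree_pos.1 (Nat.pos_of_ne_zero h.2))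
    obtain ⟨hec, hve⟩ := mem_edgesAt.1 he
    obtain ⟨heH, rfl⟩ := mem_filter.1 hec
    obtain ⟨hfM, hfe⟩ := mem_filter.1 hf
    exact (mem_sdiff.1 (hc.mem e heH)).2
      (mem_forbiddenColors hve (mem_image.2 ⟨f, mem_filter.2 ⟨hfM, rfl⟩, hfe⟩))
  omega

theorem exists_frugal_list_coloring [Nonempty α] {ℓ t r : ℕ} (hrt : 3 * r ≤ 2 * t)
    (hdeg : ∀ v, #(G.edgesAt s v) ≤ 2 * (t * ℓ) + r) (hL : ∀ e ∈ s, t ≤ #(L e)) :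
    ∃ c : E → α, (∀ e ∈ s, c e ∈ L e) ∧ ∀ a v, #(G.edgesAt {e ∈ s | c e = a} v) ≤ 2 * ℓ + 1 := by
  obtain ⟨D, M, x, y, h⟩ := exists_isMatchingDecomposition hdeg
  have hMs : M ⊆ s := h.subset_right.trans h.subset_left
  obtain ⟨c₁, hc₁L, hc₁⟩ := exists_bipartite_frugal_list_coloring x y (s \ D) L t ℓ h.out_le h.in_le
    fun e he => hL e (sdiff_subset he)
  have hc₁deg (a : α) (v : V) : #(G.edgesAt {e ∈ s \ D | c₁ e = a} v) ≤ 2 * ℓ := by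
    rw [card_edgesAt_eq_add (fun e he => h.ends_eq e (sdiff_subset (mem_filter.1 he).1)), two_mul]
    exact add_le_add ((hc₁ a).1 v) ((hc₁ a).2 v)
  obtain ⟨b, hbL, hb⟩ := exists_list_coloring_tails hc₁deg h.injOn_tail
    (fun e he => (h.card_tail_lt e he).trans_eq (mul_left_comm 2 t ℓ)) fun e he => hL e (hMs he)
  obtain ⟨c₂, hc₂L, hc₂⟩ := exists_list_coloring_heads (b := b) (L := L) h.injOn_head
    h.card_add_head_le fun e he => by
      have := hL e (h.subset_left (sdiff_subset he))
      omega
  refine ⟨D.piecewise (M.piecewise b c₂) c₁, fun e he => ?_, fun a v => ?_⟩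
  · by_cases heD : e ∈ D <;> by_cases heM : e ∈ M
    · simpa [heD, heM] using hbL e heM
    · simpa [heD, heM] using hc₂L e (mem_sdiff.2 ⟨heD, heM⟩)
    · exact absurd (h.subset_right heM) heD
    · simpa [heD] using hc₁L e (mem_sdiff.2 ⟨he, heD⟩)
  · have hsplit (s D : Finset E) (c₁ c₂ : E → α) :=
      (card_le_card (edgesAt_mono (G := G) (filter_piecewise_eq_subset s D c₁ c₂ a) v)).trans
        (card_edgesAt_union_le _ _ v)
    have hs := hsplit s D (M.piecewise b c₂) c₁
    have hD := hsplit D M b c₂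
    rw [card_edgesAt_eq_add (s := {e ∈ M | b e = a})
      fun e he => h.ends_eq e (hMs (mem_filter.1 he).1)] at hD
    have := hb a v
    have := hc₂ a v
    omega

end General

section Choosable

variable {V E α : Type*} {G : Multigraph V E} {k : ℕ}

theorem ncard_eq_card_edgesAt [Fintype E] (p : E → Prop) (v : V) :
    {e | v ∈ G.ends e ∧ p e}.ncard = #(G.edgesAt {e | p e} v) := by
  rw [← Set.ncard_coe_finset]
  congr 1
  ext e
  simp [mem_edgesAt, and_comm]

theorem card_edgesAt_univ [Fintype E] (v : V) : #(G.edgesAt univ v) = G.degree v := by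
  rw [degree, ← Set.ncard_coe_finset]
  simp [edgesAt]

theorem exists_isFrugalEdgeColoring [Fintype V] [Finite E] [Nonempty α] {ℓ t : ℕ}
    (ht : 3 * G.maxDegree ≤ (6 * ℓ + 2) * t) {L : E → Finset α} (hL : ∀ e, t ≤ #(L e)) :
    ∃ c : E → α, (∀ e, c e ∈ L e) ∧ G.IsFrugalEdgeColoring (2 * ℓ + 1) c := by
  have := Fintype.ofFinite E
  have hdeg (v : V) : #(G.edgesAt univ v) ≤ 2 * (t * ℓ) + 2 * t / 3 := by
    have hv : G.degree v ≤ G.maxDegree := le_sup (f := G.degree) (mem_univ v)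
    rw [card_edgesAt_univ]
    rw [show (6 * ℓ + 2) * t = 6 * (t * ℓ) + 2 * t by ring] at ht
    omega
  obtain ⟨c, hcL, hc⟩ :=
    exists_frugal_list_coloring (Nat.mul_div_le (2 * t) 3) hdeg fun e _ => hL e
  exact ⟨c, fun e => hcL e (mem_univ e), fun v a => (ncard_eq_card_edgesAt _ v).trans_le (hc a v)⟩

theorem IsFrugalEdgeColoring.maxDegree_le [Fintype V] [Finite E] {c : E → α} {I : Finset α}
    (hc : G.IsFrugalEdgeColoring k c) (hI : ∀ e, c e ∈ I) : G.maxDegree ≤ k * #I := by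
  have := Fintype.ofFinite E
  refine Finset.sup_le fun v _ => ?_
  rw [← card_edgesAt_univ]
  refine card_le_mul_card_image_of_maps_to (fun e _ => hI e) k fun a _ => ?_
  rw [edgesAt, filter_comm]
  exact (ncard_eq_card_edgesAt _ v).symm.trans_le (hc v a)

/-- `G` is `k`-frugally edge `t`-choosable. Integer colours are those of the definition of
`frugalEdgeChoiceNumber`. -/
def IsFrugalEdgeChoosable (G : Multigraph V E) (k t : ℕ) : Prop :=
  ∀ L : E → Finset ℤ, (∀ e, #(L e) = t) →
    ∃ c : E → ℤ, (∀ e, c e ∈ L e) ∧ G.IsFrugalEdgeColoring k c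

namespace IsFrugalEdgeChoosable

variable {t : ℕ}

theorem frugalEdgeChoiceNumber_le (h : G.IsFrugalEdgeChoosable k t) :
    G.frugalEdgeChoiceNumber k ≤ t :=
  Nat.sInf_le h

theorem exists_isFrugalEdgeColoring (h : G.IsFrugalEdgeChoosable k t) :
    ∃ c : E → ℕ, (∀ e, c e < t) ∧ G.IsFrugalEdgeColoring k c := by
  obtain ⟨c, hcL, hc⟩ := h (fun _ => (range t).map Nat.castEmbedding) fun _ => by simp
  have hcast : ∀ e, ∃ n < t, (n : ℤ) = c e := fun e => by simpa using hcL e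
  choose n hn hnc using hcast
  refine ⟨n, hn, fun v a => ?_⟩
  simpa only [← hnc, Nat.cast_inj] using hc v a

theorem frugalChromaticIndex_le_frugalEdgeChoiceNumber (h : G.IsFrugalEdgeChoosable k t) :
    G.frugalChromaticIndex k ≤ G.frugalEdgeChoiceNumber k := by
  have hne : {t | G.IsFrugalEdgeChoosable k t}.Nonempty := ⟨t, h⟩
  have hmem : G.IsFrugalEdgeChoosable k (G.frugalEdgeChoiceNumber k) := Nat.sInf_mem hne
  exact Nat.sInf_le hmem.exists_isFrugalEdgeColoring

theorem maxDegree_le_mul_frugalChromaticIndex [Fintype V] [Finite E]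
    (h : G.IsFrugalEdgeChoosable k t) :
    G.maxDegree ≤ k * G.frugalChromaticIndex k := by
  have hne : {n | ∃ c : E → ℕ, (∀ e, c e < n) ∧ G.IsFrugalEdgeColoring k c}.Nonempty :=
    ⟨t, h.exists_isFrugalEdgeColoring⟩
  obtain ⟨c, hlt, hc⟩ := Nat.sInf_mem hne
  exact (hc.maxDegree_le fun e => mem_range.2 (hlt e)).trans_eq
    (by rw [card_range, Multigraph.frugalChromaticIndex])

end IsFrugalEdgeChoosable

end Choosable

end Multigraph

/-- For a finite multigraph `G` and an odd positive integer `k`,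
`⌈Δ(G)/k⌉ ≤ χ'_k(G) ≤ ch'_k(G) ≤ ⌈3Δ(G)/(3k - 1)⌉`
(ceilings written `(a + b - 1)/b`). -/
theorem frugal_edge_odd {V E : Type*} [Fintype V] [Fintype E] (G : Multigraph V E)
    (k : ℕ) (hk : 0 < k) (hko : Odd k) :
    (G.maxDegree + k - 1) / k ≤ G.frugalChromaticIndex k ∧
    G.frugalChromaticIndex k ≤ G.frugalEdgeChoiceNumber k ∧
    G.frugalEdgeChoiceNumber k ≤ (3 * G.maxDegree + (3 * k - 1) - 1) / (3 * k - 1) := by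
  obtain ⟨ℓ, rfl⟩ := hko
  simp only [← Nat.ceilDiv_eq_add_pred_div]
  have hchoosable : G.IsFrugalEdgeChoosable (2 * ℓ + 1)
      (3 * G.maxDegree ⌈/⌉ (3 * (2 * ℓ + 1) - 1)) := fun L hL => by
    refine Multigraph.exists_isFrugalEdgeColoring ?_ fun e => (hL e).ge
    rw [show 3 * (2 * ℓ + 1) - 1 = 6 * ℓ + 2 by omega]
    exact le_smul_ceilDiv (Nat.succ_pos _)
  exact ⟨(ceilDiv_le_iff_le_mul hk).2 hchoosable.maxDegree_le_mul_frugalChromaticIndex,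
    hchoosable.frugalChromaticIndex_le_frugalEdgeChoiceNumber,
    hchoosable.frugalEdgeChoiceNumber_le⟩
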